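/- arXiv:1808.03764 — 3 statements merged into one kernel-verified Lean document; each statement's English description precedes it below -/
import Mathlib

section
/- For every n ≥ 0, the joint distribution of the quintuple of statistics (fp, exc, inv, crs, nes) over S_n(132) equals that over S_n(213): the multisets {(fp(σ), exc(σ), inv(σ), crs(σ), nes(σ)) : σ ∈ S_n(132)} and {(fp(σ), exc(σ), inv(σ), crs(σ), nes(σ)) : σ ∈ S_n(213)} are equal. -/
open Equiv Finset

/-- Number of crossings of a permutation of `Fin n` (0-indexed version of the
classical definition on `[n] = {1,…,n}`): pairs `(i,j)` with
`i<j<σ(i)<σ(j)` or `σ(i)<σ(j)≤i<j`. -/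
def crs {n : ℕ} (σ : Equiv.Perm (Fin n)) : ℕ :=
  (Finset.univ.filter (fun q : Fin n × Fin n =>
    ((q.1 : ℕ) < q.2 ∧ (q.2 : ℕ) < σ q.1 ∧ (σ q.1 : ℕ) < σ q.2) ∨
    ((σ q.1 : ℕ) < σ q.2 ∧ (σ q.2 : ℕ) ≤ q.1 ∧ (q.1 : ℕ) < q.2))).card

/-- Number of nestings of a permutation of `Fin n`: pairs `(i,j)` with
`i<j<σ(j)<σ(i)` or `σ(j)<σ(i)≤i<j`. -/
def nes {n : ℕ} (σ : Equiv.Perm (Fin n)) : ℕ :=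
  (Finset.univ.filter (fun q : Fin n × Fin n =>
    ((q.1 : ℕ) < q.2 ∧ (q.2 : ℕ) < σ q.2 ∧ (σ q.2 : ℕ) < σ q.1) ∨
    ((σ q.2 : ℕ) < σ q.1 ∧ (σ q.1 : ℕ) ≤ q.1 ∧ (q.1 : ℕ) < q.2))).card

/-- Number of fixed points. -/
def fp {n : ℕ} (σ : Equiv.Perm (Fin n)) : ℕ :=
  (Finset.univ.filter (fun i : Fin n => σ i = i)).card

/-- Number of excedances. -/
def exc {n : ℕ} (σ : Equiv.Perm (Fin n)) : ℕ :=
  (Finset.univ.filter (fun i : Fin n => (i : ℕ) < σ i)).card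

/-- Number of inversions. -/
def invStat {n : ℕ} (σ : Equiv.Perm (Fin n)) : ℕ :=
  (Finset.univ.filter (fun q : Fin n × Fin n => q.1 < q.2 ∧ σ q.2 < σ q.1)).card

/-- `σ` contains the pattern `τ`: there is a strictly increasing choice of positions
on which `σ` is order-isomorphic to `τ`. -/
def Contains {n k : ℕ} (σ : Equiv.Perm (Fin n)) (τ : Equiv.Perm (Fin k)) : Prop :=
  ∃ f : Fin k → Fin n, StrictMono f ∧ ∀ a b : Fin k, σ (f a) < σ (f b) ↔ τ a < τ b

/-- `σ` avoids the pattern `τ`. -/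
def Avoids {n k : ℕ} (σ : Equiv.Perm (Fin n)) (τ : Equiv.Perm (Fin k)) : Prop :=
  ¬ Contains σ τ

/-- The pattern 123 (as a permutation of `Fin 3`, 0-indexed). -/
def p123 : Equiv.Perm (Fin 3) := 1
/-- The pattern 132. -/
def p132 : Equiv.Perm (Fin 3) := Equiv.swap 1 2
/-- The pattern 213. -/
def p213 : Equiv.Perm (Fin 3) := Equiv.swap 0 1
/-- The pattern 321. -/
def p321 : Equiv.Perm (Fin 3) := Equiv.swap 0 2
/-- The pattern 231. -/
def p231 : Equiv.Perm (Fin 3) := Equiv.swap 0 2 * Equiv.swap 0 1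
/-- The pattern 312. -/
def p312 : Equiv.Perm (Fin 3) := Equiv.swap 0 2 * Equiv.swap 1 2

/-!
Reflecting the permutation diagram `{(i, σ i)}` in its antidiagonal sends the point `(i, σ i)` to
`((σ i).rev, i.rev)`. This preserves the main diagonal and each of its two sides, so fixed points,
excedances, inversions, crossings and nestings are mapped to configurations of the same kind, while
an occurrence of a pattern becomes an occurrence of the reflected pattern.
The reflection of 132 is 213.
-/

section Reflection

variable {n k : ℕ}

/-- The reverse-complement-inverse of a permutation: the permutation whose diagram is the
reflection of the diagram of `σ` in the antidiagonal. Conjugation by `Fin.revPerm` performs both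
the reversal and the complementation. -/
def revCompInv (σ : Perm (Fin n)) : Perm (Fin n) :=
  Fin.revPerm * σ⁻¹ * Fin.revPerm

theorem revCompInv_apply (σ : Perm (Fin n)) (i : Fin n) : revCompInv σ i = (σ⁻¹ i.rev).rev :=
  rfl

theorem revCompInv_rev_apply (σ : Perm (Fin n)) (i : Fin n) :
    revCompInv σ (σ i).rev = i.rev := by
  simp [revCompInv_apply]

theorem revCompInv_involutive :
    Function.Involutive (revCompInv : Perm (Fin n) → Perm (Fin n)) := by
  intro σ
  ext i
  simp [revCompInv, mul_assoc, Perm.inv_def]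

theorem card_filter_revCompInv (σ : Perm (Fin n)) (P : Fin n → Fin n → Prop) [DecidableRel P] :
    #{i | P i (revCompInv σ i)} = #{i | P (σ i).rev i.rev} :=
  (card_equiv (σ.trans Fin.revPerm) fun i => by simp [revCompInv_rev_apply]).symm

theorem card_filter_prod_revCompInv (σ : Perm (Fin n))
    (P : Fin n → Fin n → Fin n → Fin n → Prop) [∀ a b c d, Decidable (P a b c d)] :
    #{q : Fin n × Fin n | P q.1 (revCompInv σ q.1) q.2 (revCompInv σ q.2)} =
      #{q : Fin n × Fin n | P (σ q.1).rev q.1.rev (σ q.2).rev q.2.rev} :=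
  (card_equiv ((σ.trans Fin.revPerm).prodCongr (σ.trans Fin.revPerm)) fun q => by
    simp [revCompInv_rev_apply]).symm

theorem fp_revCompInv (σ : Perm (Fin n)) : fp (revCompInv σ) = fp σ := by
  refine (card_filter_revCompInv σ fun i j => j = i).trans ?_
  simp only [fp, Fin.rev_inj, eq_comm]

theorem exc_revCompInv (σ : Perm (Fin n)) : exc (revCompInv σ) = exc σ := by
  refine (card_filter_revCompInv σ fun i j => i < j).trans ?_
  simp only [exc, Fin.rev_lt_rev, Fin.val_fin_lt]

theorem invStat_revCompInv (σ : Perm (Fin n)) : invStat (revCompInv σ) = invStat σ := by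
  refine (card_filter_prod_revCompInv σ fun i x j y => i < j ∧ y < x).trans ?_
  simp only [invStat, Fin.rev_lt_rev, and_comm]

theorem nes_revCompInv (σ : Perm (Fin n)) : nes (revCompInv σ) = nes σ := by
  refine (card_filter_prod_revCompInv σ fun i x j y =>
    (i < j ∧ j < y ∧ y < x) ∨ (y < x ∧ x ≤ i ∧ i < j)).trans ?_
  refine congrArg card (filter_congr fun q _ => ?_)
  simp only [Fin.rev_lt_rev, Fin.rev_le_rev, Fin.val_fin_lt, Fin.val_fin_le]
  tauto

theorem crs_revCompInv (σ : Perm (Fin n)) : crs (revCompInv σ) = crs σ := by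
  refine (card_filter_prod_revCompInv σ fun i x j y =>
    (i < j ∧ j < x ∧ x < y) ∨ (x < y ∧ y ≤ i ∧ i < j)).trans ?_
  -- Unlike nestings, crossings increase in both coordinates, so the reflection swaps their points.
  refine card_equiv (Equiv.prodComm _ _) fun q => ?_
  simp only [mem_filter_univ, Equiv.prodComm_apply, Prod.fst_swap, Prod.snd_swap,
    Fin.rev_lt_rev, Fin.rev_le_rev, Fin.val_fin_lt, Fin.val_fin_le]
  tauto

protected theorem Contains.revCompInv {σ : Perm (Fin n)} {τ : Perm (Fin k)} (h : Contains σ τ) :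
    Contains (revCompInv σ) (revCompInv τ) := by
  obtain ⟨f, hf, hστ⟩ := h
  -- Column `a` of the reflected pattern is row `a.rev` of `τ`, hence the index `τ⁻¹ a.rev`.
  refine ⟨fun a => (σ (f (τ⁻¹ a.rev))).rev, fun a b hab => ?_, fun a b => ?_⟩
  · simpa [hστ] using hab
  · simp [revCompInv_apply, hf.lt_iff_lt]

theorem contains_revCompInv_iff {σ : Perm (Fin n)} {τ : Perm (Fin k)} :
    Contains (revCompInv σ) (revCompInv τ) ↔ Contains σ τ :=
  ⟨fun h => by simpa only [revCompInv_involutive _] using h.revCompInv, Contains.revCompInv⟩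

theorem avoids_revCompInv_iff {σ : Perm (Fin n)} {τ : Perm (Fin k)} :
    Avoids (revCompInv σ) (revCompInv τ) ↔ Avoids σ τ :=
  not_congr contains_revCompInv_iff

open scoped Classical in
theorem map_filter_avoids_revCompInv (n : ℕ) (τ : Perm (Fin k)) :
    (univ.filter fun σ : Perm (Fin n) => Avoids σ τ).map
        (revCompInv_involutive.toPerm revCompInv).toEmbedding =
      univ.filter fun σ : Perm (Fin n) => Avoids σ (revCompInv τ) := by
  ext σ
  rw [mem_map_equiv, mem_filter_univ, mem_filter_univ, ← avoids_revCompInv_iff,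
    Function.Involutive.toPerm_symm, Function.Involutive.coe_toPerm, revCompInv_involutive σ]

theorem revCompInv_p132 : revCompInv p132 = p213 := by
  decide

open scoped Classical in
theorem fp_exc_inv_crs_nes_joint_132_213_general (n : ℕ) (τ : Perm (Fin k)) :
    (univ.filter fun σ : Perm (Fin n) => Avoids σ τ).val.map
        (fun σ => (fp σ, exc σ, invStat σ, crs σ, nes σ)) =
      (univ.filter fun σ : Perm (Fin n) => Avoids σ (revCompInv τ)).val.map
        (fun σ => (fp σ, exc σ, invStat σ, crs σ, nes σ)) := by
  rw [← map_filter_avoids_revCompInv, map_val, Multiset.map_map]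
  refine Multiset.map_congr rfl fun σ _ => ?_
  simp only [Function.comp_apply, Equiv.coe_toEmbedding, Function.Involutive.coe_toPerm,
    fp_revCompInv, exc_revCompInv, invStat_revCompInv, crs_revCompInv, nes_revCompInv]

end Reflection

open scoped Classical in
/-- The joint distribution of `(fp, exc, inv, crs, nes)` over `S_n(132)` equals
that over `S_n(213)`. -/
theorem fp_exc_inv_crs_nes_joint_132_213 (n : ℕ) :
    ((Finset.univ.filter (fun σ : Equiv.Perm (Fin n) => Avoids σ p132)).val.map
        (fun σ => (fp σ, exc σ, invStat σ, crs σ, nes σ)))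
      = ((Finset.univ.filter (fun σ : Equiv.Perm (Fin n) => Avoids σ p213)).val.map
        (fun σ => (fp σ, exc σ, invStat σ, crs σ, nes σ))) := by
  simpa only [revCompInv_p132] using fp_exc_inv_crs_nes_joint_132_213_general n p132
end

section
/- For every n ≥ 0, there exists a bijection Θ from S_n(321) to S_n(132) that simultaneously preserves the number of fixed points, the number of excedances and the number of crossings: fp(Θ(σ))=fp(σ), exc(Θ(σ))=exc(σ) and crs(Θ(σ))=crs(σ) for all σ ∈ S_n(321). -/
/-!
Both sides are sums over lattice paths, computed with one generic weight.

A nonempty `132`-avoiding permutation decomposes uniquely around its maximum, as a Dyck path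
decomposes around its first return, so its entries correspond to the tunnels of a Dyck path. When
the path is centred at the origin, an excedance is a tunnel centred to the left of the origin, a
fixed point is a centred tunnel, and the number of crossings is determined by the abscissas of the
ends of the tunnels. Weigh a tunnel by a factor depending only on its outer end and a factor
depending only on the unit step of the path at its inner end. Then the path can be read from its two
extremities towards its centre, two unit steps at a time: a tunnel is opened when its outer end is
met and closed when its inner end is met. This produces a two-coloured Motzkin path.

The two-coloured Motzkin paths are also the words recording the positions and the values of the
excedances of the `321`-avoiding permutations, which determine such a permutation because it
increases on its excedances and on its other positions. Every arc `i ↦ σ i` then has the weight of a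
tunnel from `i - n` to `n - σ i`, and comparing the two sums in a Laurent polynomial ring gives the
joint equidistribution of the three statistics.
-/

open Equiv Finset

section Patterns

variable {n k : ℕ}

theorem contains_iff_exists_strictMono {σ : Perm (Fin n)} {τ : Perm (Fin k)} :
    Contains σ τ ↔ ∃ f : Fin k → Fin n, StrictMono f ∧ StrictMono (σ ∘ f ∘ τ.symm) := by
  refine exists_congr fun f => and_congr_right fun _ => ?_
  constructor
  · intro h a b hab
    exact (h _ _).2 (by simpa using hab)
  · intro h a b
    simpa using h.lt_iff_lt (a := τ a) (b := τ b)

theorem strictMono_fin_three_iff {α : Type*} [Preorder α] {f : Fin 3 → α} :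
    StrictMono f ↔ f 0 < f 1 ∧ f 1 < f 2 := by
  simp [Fin.strictMono_iff_lt_succ, Fin.forall_fin_two]

theorem contains_fin_three_iff {σ : Perm (Fin n)} {τ : Perm (Fin 3)} :
    Contains σ τ ↔ ∃ f : Fin 3 → Fin n, (f 0 < f 1 ∧ f 1 < f 2) ∧
      σ (f (τ.symm 0)) < σ (f (τ.symm 1)) ∧ σ (f (τ.symm 1)) < σ (f (τ.symm 2)) := by
  simp only [contains_iff_exists_strictMono, strictMono_fin_three_iff, Function.comp_apply]

theorem avoids_p321_iff {σ : Perm (Fin n)} :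
    Avoids σ p321 ↔ ∀ i j k, i < j → j < k → ¬ (σ k < σ j ∧ σ j < σ i) := by
  have h0 : p321.symm 0 = 2 := by decide
  have h1 : p321.symm 1 = 1 := by decide
  have h2 : p321.symm 2 = 0 := by decide
  rw [Avoids, contains_fin_three_iff, h0, h1, h2]
  constructor
  · exact fun h i j k hij hjk hσ => h ⟨![i, j, k], ⟨hij, hjk⟩, hσ⟩
  · rintro h ⟨f, ⟨hf, hf'⟩, hσ⟩
    exact h _ _ _ hf hf' hσ

theorem avoids_p132_iff {σ : Perm (Fin n)} :
    Avoids σ p132 ↔ ∀ i j k, i < j → j < k → ¬ (σ i < σ k ∧ σ k < σ j) := by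
  have h0 : p132.symm 0 = 0 := by decide
  have h1 : p132.symm 1 = 2 := by decide
  have h2 : p132.symm 2 = 1 := by decide
  rw [Avoids, contains_fin_three_iff, h0, h1, h2]
  constructor
  · exact fun h i j k hij hjk hσ => h ⟨![i, j, k], ⟨hij, hjk⟩, hσ⟩
  · rintro h ⟨f, ⟨hf, hf'⟩, hσ⟩
    exact h _ _ _ hf hf' hσ

end Patterns

section Sums

variable {m n : ℕ}

/-- The direct sum of two permutations: `τ` placed to the upper right of `σ`. -/
def permDirectSum (σ : Perm (Fin m)) (τ : Perm (Fin n)) : Perm (Fin (m + n)) :=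
  finSumFinEquiv.permCongr (Perm.sumCongr σ τ)

/-- The skew sum of two permutations: `τ` placed to the lower right of `σ`. It is the direct sum
conjugated by the reversal of values. -/
def permSkewSum (σ : Perm (Fin m)) (τ : Perm (Fin n)) : Perm (Fin (m + n)) :=
  Fin.revPerm * permDirectSum (Fin.revPerm * σ) (Fin.revPerm * τ)

section Apply

variable (σ : Perm (Fin m)) (τ : Perm (Fin n))

@[simp]
theorem permDirectSum_castAdd (i : Fin m) :
    permDirectSum σ τ (Fin.castAdd n i) = Fin.castAdd n (σ i) := by
  simp [permDirectSum, permCongr_apply]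

@[simp]
theorem permDirectSum_natAdd (j : Fin n) :
    permDirectSum σ τ (Fin.natAdd m j) = Fin.natAdd m (τ j) := by
  simp [permDirectSum, permCongr_apply]

@[simp]
theorem val_permSkewSum_castAdd (i : Fin m) :
    (permSkewSum σ τ (Fin.castAdd n i) : ℕ) = n + σ i := by
  simp only [permSkewSum, Perm.coe_mul, Function.comp_apply, permDirectSum_castAdd,
    Fin.revPerm_apply, Fin.val_rev, Fin.val_castAdd]
  omega

@[simp]
theorem val_permSkewSum_natAdd (j : Fin n) :
    (permSkewSum σ τ (Fin.natAdd m j) : ℕ) = τ j := by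
  simp only [permSkewSum, Perm.coe_mul, Function.comp_apply, permDirectSum_natAdd,
    Fin.revPerm_apply, Fin.val_rev, Fin.val_natAdd]
  omega

end Apply

theorem permDirectSum_injective :
    Function.Injective fun p : Perm (Fin m) × Perm (Fin n) => permDirectSum p.1 p.2 :=
  finSumFinEquiv.permCongr.injective.comp Perm.sumCongrHom_injective

theorem permSkewSum_injective :
    Function.Injective fun p : Perm (Fin m) × Perm (Fin n) => permSkewSum p.1 p.2 :=
  (mul_right_injective _).comp <| permDirectSum_injective.comp <|
    (mul_right_injective (Fin.revPerm : Perm (Fin m))).prodMap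
      (mul_right_injective (Fin.revPerm : Perm (Fin n)))

theorem forall_fin_add_iff {p : Fin (m + n) → Prop} :
    (∀ i, p i) ↔ (∀ i, p (Fin.castAdd n i)) ∧ ∀ j, p (Fin.natAdd m j) :=
  ⟨fun h => ⟨fun _ => h _, fun _ => h _⟩, fun h => Fin.addCases h.1 h.2⟩

theorem exists_permDirectSum_eq {σ : Perm (Fin (m + n))}
    (h : ∀ i j, σ (Fin.castAdd n i) < σ (Fin.natAdd m j)) :
    ∃ τ ρ, permDirectSum τ ρ = σ := by
  have lt_left (i : Fin m) : (σ (Fin.castAdd n i) : ℕ) < m := by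
    have hcard := card_le_card_of_injOn (s := univ) (t := Ioi (σ (Fin.castAdd n i)))
      (fun j => σ (Fin.natAdd m j)) (fun j _ => by simpa using h i j)
      fun a _ b _ hab => by simpa using hab
    simp only [card_univ, Fintype.card_fin, Fin.card_Ioi] at hcard
    omega
  obtain ⟨⟨τ, ρ⟩, hτρ⟩ : finSumFinEquiv.symm.permCongr σ ∈ (Perm.sumCongrHom _ _).range := by
    refine Perm.mem_sumCongrHom_range_of_perm_mapsTo_inl ?_
    rintro _ ⟨i, rfl⟩
    refine ⟨⟨_, lt_left i⟩, ?_⟩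
    rw [permCongr_apply, eq_comm, symm_apply_eq]
    ext
    simp
  refine ⟨τ, ρ, ?_⟩
  rw [permDirectSum, ← eq_symm_apply]
  exact hτρ

theorem exists_permSkewSum_eq {σ : Perm (Fin (m + n))}
    (h : ∀ i j, σ (Fin.natAdd m j) < σ (Fin.castAdd n i)) :
    ∃ τ ρ, permSkewSum τ ρ = σ := by
  obtain ⟨τ, ρ, hτρ⟩ := exists_permDirectSum_eq (σ := Fin.revPerm * σ) fun i j => by
    simpa using h i j
  exact ⟨Fin.revPerm⁻¹ * τ, Fin.revPerm⁻¹ * ρ, by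
    rw [permSkewSum, mul_inv_cancel_left, mul_inv_cancel_left, hτρ, ← mul_assoc]
    ext
    simp⟩

theorem avoids_permSkewSum_iff {σ : Perm (Fin m)} {τ : Perm (Fin n)} :
    Avoids (permSkewSum σ τ) p132 ↔ Avoids σ p132 ∧ Avoids τ p132 := by
  simp only [avoids_p132_iff, forall_fin_add_iff, Fin.lt_def, val_permSkewSum_castAdd,
    val_permSkewSum_natAdd, Fin.val_castAdd, Fin.val_natAdd]
  grind

theorem avoids_permDirectSum_one_iff {σ : Perm (Fin m)} :
    Avoids (permDirectSum σ (1 : Perm (Fin 1))) p132 ↔ Avoids σ p132 := by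
  simp only [avoids_p132_iff, forall_fin_add_iff, Fin.lt_def, permDirectSum_castAdd,
    permDirectSum_natAdd, Fin.val_castAdd, Fin.val_natAdd, Perm.one_apply]
  grind

/-- A `132`-avoiding permutation splits at its maximum: all entries before the maximum exceed all
entries after it. -/
theorem exists_permSkewSum_permDirectSum_eq {σ : Perm (Fin (m + 1 + n))} (hσ : Avoids σ p132)
    (hmax : ∀ i, σ i ≤ σ (Fin.castAdd n (Fin.last m))) :
    ∃ τ ρ, permSkewSum (permDirectSum τ 1) ρ = σ := by
  have lt_max {i} (hi : i ≠ Fin.castAdd n (Fin.last m)) : σ i < σ (Fin.castAdd n (Fin.last m)) :=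
    (hmax i).lt_of_ne (σ.injective.ne hi)
  have right_lt_left (i : Fin (m + 1)) (j : Fin n) :
      σ (Fin.natAdd (m + 1) j) < σ (Fin.castAdd n i) := by
    have hj : Fin.castAdd n (Fin.last m) < Fin.natAdd (m + 1) j := by simp [Fin.lt_def]; omega
    obtain rfl | hi := eq_or_ne i (Fin.last m)
    · exact lt_max hj.ne'
    have hi' : Fin.castAdd n i < Fin.castAdd n (Fin.last m) := by
      simpa [Fin.lt_def] using Fin.lt_last_iff_ne_last.2 hi
    have hne : σ (Fin.castAdd n i) ≠ σ (Fin.natAdd (m + 1) j) := σ.injective.ne (hi'.trans hj).ne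
    exact hne.lt_or_gt.resolve_left fun hlt =>
      avoids_p132_iff.1 hσ _ _ _ hi' hj ⟨hlt, lt_max hj.ne'⟩
  obtain ⟨α, ρ, rfl⟩ := exists_permSkewSum_eq right_lt_left
  obtain ⟨τ, κ, rfl⟩ := exists_permDirectSum_eq (σ := α) (m := m) (n := 1) fun i j => by
    have h := lt_max (i := Fin.castAdd n i.castSucc) (by simp [Fin.ext_iff]; omega)
    simp only [Fin.lt_def, val_permSkewSum_castAdd, Nat.add_lt_add_iff_left] at h
    rwa [Subsingleton.elim j 0]
  exact ⟨τ, ρ, by rw [Subsingleton.elim κ 1]⟩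

end Sums

section Tunnels

variable {m n : ℕ}

/-- The number of points of the diagram of `σ` to the lower left of the point at `i`. -/
def lowerLeft (σ : Perm (Fin n)) (i : Fin n) : ℕ :=
  #{j | j < i ∧ σ j < σ i}

/-- The abscissa of the left end of the tunnel corresponding to the point at `i`, in the Dyck path
from `0` to `2 * n` attached to a `132`-avoiding permutation `σ` of `Fin n`. -/
def tunnelLeft (σ : Perm (Fin n)) (i : Fin n) : ℤ :=
  n + i - σ i - lowerLeft σ i - 1

/-- The abscissa of the right end of the tunnel corresponding to the point at `i`. -/
def tunnelRight (σ : Perm (Fin n)) (i : Fin n) : ℤ :=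
  n + i - σ i + lowerLeft σ i + 1

theorem card_filter_fin_add (p : Fin (m + n) → Prop) [DecidablePred p] :
    #{i | p i} = #{i | p (Fin.castAdd n i)} + #{j | p (Fin.natAdd m j)} := by
  simp only [card_filter, Fin.sum_univ_add]

section Sums

variable (σ : Perm (Fin m)) (τ : Perm (Fin n))

theorem lowerLeft_permDirectSum_castAdd (i : Fin m) :
    lowerLeft (permDirectSum σ τ) (Fin.castAdd n i) = lowerLeft σ i := by
  have hn (j : Fin n) : ¬ m + (j : ℕ) < i := by omega
  simp only [lowerLeft, card_filter_fin_add, permDirectSum_castAdd, Fin.lt_def, Fin.val_castAdd,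
    Fin.val_natAdd, hn, false_and, filter_false, card_empty, add_zero]

theorem lowerLeft_permDirectSum_natAdd (j : Fin n) :
    lowerLeft (permDirectSum σ τ) (Fin.natAdd m j) = m + lowerLeft τ j := by
  have hm (i : Fin m) (l : Fin n) : (i : ℕ) < m + l := by omega
  simp only [lowerLeft, card_filter_fin_add, permDirectSum_castAdd, permDirectSum_natAdd,
    Fin.lt_def, Fin.val_castAdd, Fin.val_natAdd, hm, Nat.add_lt_add_iff_left, and_self,
    filter_true, card_univ, Fintype.card_fin]

theorem lowerLeft_permSkewSum_castAdd (i : Fin m) :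
    lowerLeft (permSkewSum σ τ) (Fin.castAdd n i) = lowerLeft σ i := by
  have hn (j : Fin n) : ¬ m + (j : ℕ) < i := by omega
  simp only [lowerLeft, card_filter_fin_add, val_permSkewSum_castAdd, Fin.lt_def, Fin.val_castAdd,
    Fin.val_natAdd, hn, Nat.add_lt_add_iff_left, false_and, filter_false, card_empty, add_zero]

theorem lowerLeft_permSkewSum_natAdd (j : Fin n) :
    lowerLeft (permSkewSum σ τ) (Fin.natAdd m j) = lowerLeft τ j := by
  have hm (i : Fin m) (l : Fin n) : ¬ n + (σ i : ℕ) < τ l := by omega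
  simp only [lowerLeft, card_filter_fin_add, val_permSkewSum_castAdd, val_permSkewSum_natAdd,
    Fin.lt_def, Fin.val_natAdd, hm, Nat.add_lt_add_iff_left, and_false, filter_false, card_empty,
    zero_add]

end Sums

/-- The weight of a permutation: the product over its tunnels of a weight depending on the two ends,
the whole path being translated so as to start at `a`. -/
def tunnelProd {R : Type*} [CommMonoid R] (W : ℤ → ℤ → R) (a : ℤ) (σ : Perm (Fin n)) : R :=
  ∏ i, W (a + tunnelLeft σ i) (a + tunnelRight σ i)

theorem tunnelProd_permSkewSum {R : Type*} [CommMonoid R] (W : ℤ → ℤ → R) (a : ℤ)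
    (σ : Perm (Fin m)) (τ : Perm (Fin n)) :
    tunnelProd W a (permSkewSum σ τ) = tunnelProd W a σ * tunnelProd W (a + 2 * m) τ := by
  rw [tunnelProd, Fin.prod_univ_add]
  congr 1 <;> refine prod_congr rfl fun i _ => ?_ <;>
    simp only [tunnelLeft, tunnelRight, lowerLeft_permSkewSum_castAdd, val_permSkewSum_castAdd,
      lowerLeft_permSkewSum_natAdd, val_permSkewSum_natAdd, Fin.val_castAdd, Fin.val_natAdd,
      Nat.cast_add] <;>
    congr 1 <;> ring

theorem tunnelProd_permDirectSum_one {R : Type*} [CommMonoid R] (W : ℤ → ℤ → R) (a : ℤ)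
    (σ : Perm (Fin m)) :
    tunnelProd W a (permDirectSum σ (1 : Perm (Fin 1))) =
      tunnelProd W (a + 1) σ * W a (a + 2 * m + 2) := by
  rw [tunnelProd, Fin.prod_univ_add, Fin.prod_univ_one]
  have hone : lowerLeft (1 : Perm (Fin 1)) 0 = 0 := by simp [lowerLeft]
  congr 1
  · refine prod_congr rfl fun i _ => ?_
    simp only [tunnelLeft, tunnelRight, lowerLeft_permDirectSum_castAdd, permDirectSum_castAdd,
      Fin.val_castAdd, Nat.cast_add]
    congr 1 <;> push_cast <;> ring
  · simp only [tunnelLeft, tunnelRight, lowerLeft_permDirectSum_natAdd, permDirectSum_natAdd,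
      Fin.val_natAdd, Nat.cast_add, hone, Perm.one_apply]
    congr 1 <;> push_cast <;> ring

section AvoidSum

variable {R : Type*} [CommSemiring R] (W : ℤ → ℤ → R)

open scoped Classical in
/-- The generating function of `132`-avoiding permutations of `Fin n` by the weights of their
tunnels. -/
noncomputable def tunnelSum (n : ℕ) (a : ℤ) : R :=
  ∑ σ : Perm (Fin n) with Avoids σ p132, tunnelProd W a σ

theorem tunnelSum_zero (a : ℤ) : tunnelSum W 0 a = 1 := by
  have havoid (σ : Perm (Fin 0)) : Avoids σ p132 := avoids_p132_iff.2 fun i => i.elim0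
  simp [tunnelSum, tunnelProd, havoid]

open scoped Classical in
theorem sum_tunnelProd_of_max_at {k l N : ℕ} (hN : N = k + 1 + l) (a : ℤ) :
    ∑ σ : Perm (Fin N) with Avoids σ p132 ∧ ∀ i j : Fin N, (i : ℕ) = k → σ j ≤ σ i,
        tunnelProd W a σ =
      tunnelSum W k (a + 1) * W a (a + 2 * k + 2) * tunnelSum W l (a + 2 * k + 2) := by
  subst hN
  rw [tunnelSum, tunnelSum, mul_right_comm, sum_mul_sum, ← sum_product', sum_mul]
  symm
  refine sum_bij (fun p _ => permSkewSum (permDirectSum p.1 1) p.2) ?_ ?_ ?_ ?_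
  · rintro ⟨τ, ρ⟩ h
    simp only [mem_product, mem_filter, mem_univ, true_and] at h ⊢
    refine ⟨avoids_permSkewSum_iff.2 ⟨avoids_permDirectSum_one_iff.2 h.1, h.2⟩, fun i j hi => ?_⟩
    obtain rfl : i = Fin.castAdd l (Fin.natAdd k 0) := Fin.ext hi
    rw [Fin.le_def, val_permSkewSum_castAdd, permDirectSum_natAdd]
    simp
    omega
  · rintro ⟨τ, ρ⟩ _ ⟨τ', ρ'⟩ _ h
    obtain ⟨hα, rfl⟩ := Prod.mk.inj <|
      permSkewSum_injective (a₁ := (permDirectSum τ 1, ρ)) (a₂ := (permDirectSum τ' 1, ρ')) h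
    obtain ⟨rfl, -⟩ := Prod.mk.inj <| permDirectSum_injective (a₁ := (τ, 1)) (a₂ := (τ', 1)) hα
    rfl
  · intro σ h
    simp only [mem_filter, mem_univ, true_and] at h
    obtain ⟨τ, ρ, rfl⟩ := exists_permSkewSum_permDirectSum_eq h.1 fun j => h.2 _ j (by simp)
    rw [avoids_permSkewSum_iff, avoids_permDirectSum_one_iff] at h
    exact ⟨(τ, ρ), by simpa using h.1, rfl⟩
  · rintro ⟨τ, ρ⟩ _
    rw [tunnelProd_permSkewSum, tunnelProd_permDirectSum_one, mul_right_comm]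
    push_cast
    congr 2
    ring

theorem tunnelSum_succ (n : ℕ) (a : ℤ) :
    tunnelSum W (n + 1) a = ∑ p ∈ antidiagonal n,
      tunnelSum W p.1 (a + 1) * W a (a + 2 * p.1 + 2) * tunnelSum W p.2 (a + 2 * p.1 + 2) := by
  classical
  rw [tunnelSum, ← sum_fiberwise_of_maps_to (t := antidiagonal n)
    (g := fun σ => ((σ.symm (Fin.last n) : ℕ), n - (σ.symm (Fin.last n) : ℕ)))
    fun σ _ => HasAntidiagonal.mem_antidiagonal.2 (by omega)]
  refine sum_congr rfl fun ⟨k, l⟩ hkl => ?_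
  rw [HasAntidiagonal.mem_antidiagonal] at hkl
  rw [← sum_tunnelProd_of_max_at W (show n + 1 = k + 1 + l by omega), filter_filter]
  refine sum_congr (filter_congr fun σ _ => and_congr_right fun _ => ?_) fun _ _ => rfl
  constructor
  · rintro h i j rfl
    obtain rfl : i = σ.symm (Fin.last n) := Fin.ext (Prod.mk.inj h).1.symm
    simpa using Fin.le_last _
  · intro h
    have hlast := h ⟨k, by omega⟩ (σ.symm (Fin.last n)) rfl
    rw [apply_symm_apply, Fin.last_le_iff, ← eq_symm_apply] at hlast
    simp [← hlast]
    omega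

end AvoidSum

end Tunnels

section FirstReturn

variable {α R : Type*} [PartialOrder α] [LocallyFiniteOrder α] [Semiring R]

theorem eq_of_eq_add_mul {f g x x' : IncidenceAlgebra R α} (hf : ∀ a, f a a = 0)
    (hx : x = g + f * x) (hx' : x' = g + f * x') : x = x' := by
  classical
  ext a b -
  induction hn : #(Icc a b) using Nat.strong_induction_on generalizing a with
  | _ n ih =>
    rw [hx, hx', IncidenceAlgebra.add_apply, IncidenceAlgebra.add_apply,
      IncidenceAlgebra.mul_apply, IncidenceAlgebra.mul_apply]
    congr 1
    refine sum_congr rfl fun e he => ?_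
    obtain rfl | hne := eq_or_ne a e
    · rw [hf, zero_mul, zero_mul]
    · have hlt : a < e := (mem_Icc.1 he).1.lt_of_ne hne
      rw [ih _ (hn ▸ card_lt_card (Icc_ssubset_Icc_left (hlt.le.trans (mem_Icc.1 he).2) hlt le_rfl))
        e rfl]

theorem commute_of_eq_one_add_mul [DecidableEq α] {f x : IncidenceAlgebra R α}
    (hf : ∀ a, f a a = 0) (hx : x = 1 + f * x) : Commute x f := by
  refine eq_of_eq_add_mul hf (g := f) ?_ ?_
  · conv_lhs => rw [hx, add_mul, one_mul, mul_assoc]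
  · conv_lhs => rw [hx, mul_add, mul_one]

end FirstReturn

section PathSum

variable {R : Type*} [CommSemiring R] (W : ℤ → ℤ → R)

/-- The generating function of Dyck paths from `a` to `b` on the horizontal axis, weighted by their
tunnels, as an element of the incidence algebra of `ℤ`. -/
noncomputable def pathSum : IncidenceAlgebra R ℤ where
  toFun a b := if a ≤ b ∧ Even (b - a) then tunnelSum W ((b - a) / 2).toNat a else 0
  eq_zero_of_not_le' _ _ h := if_neg fun h' => h h'.1

theorem pathSum_add_two_mul (a : ℤ) (n : ℕ) : pathSum W a (a + 2 * n) = tunnelSum W n a := by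
  simp [pathSum]

@[simp]
theorem pathSum_self (a : ℤ) : pathSum W a a = 1 := by
  simpa [tunnelSum_zero] using pathSum_add_two_mul W a 0

variable {W} in
theorem exists_eq_of_pathSum_ne_zero {a b : ℤ} (h : pathSum W a b ≠ 0) :
    ∃ n : ℕ, b = a + 2 * n := by
  obtain ⟨hab, k, hk⟩ := of_not_not fun h' => h (if_neg h')
  exact ⟨k.toNat, by omega⟩

/-- The part of `pathSum` coming from the paths which return to the axis only at their end. -/
noncomputable def archSum : IncidenceAlgebra R ℤ where
  toFun a b := W a b * pathSum W (a + 1) (b - 1)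
  eq_zero_of_not_le' a b h := by
    rw [IncidenceAlgebra.apply_eq_zero_of_not_le (by omega), mul_zero]

theorem archSum_apply (a b : ℤ) : archSum W a b = W a b * pathSum W (a + 1) (b - 1) :=
  rfl

theorem archSum_self (a : ℤ) : archSum W a a = 0 := by
  rw [archSum_apply, IncidenceAlgebra.apply_eq_zero_of_not_le (by omega), mul_zero]

variable {W} in
theorem exists_eq_of_archSum_ne_zero {a b : ℤ} (h : archSum W a b ≠ 0) :
    ∃ n : ℕ, b = a + 2 * n + 2 := by
  obtain ⟨n, hn⟩ := exists_eq_of_pathSum_ne_zero (right_ne_zero_of_mul h)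
  exact ⟨n, by omega⟩

theorem pathSum_eq_one_add_archSum_mul : pathSum W = 1 + archSum W * pathSum W := by
  ext a b -
  rw [IncidenceAlgebra.add_apply, IncidenceAlgebra.mul_apply, IncidenceAlgebra.one_apply]
  obtain rfl | hne := eq_or_ne a b
  · simp [archSum_self]
  rw [if_neg hne, zero_add]
  by_cases hab : ∃ n : ℕ, b = a + 2 * (n + 1 : ℕ)
  · obtain ⟨n, rfl⟩ := hab
    rw [pathSum_add_two_mul, tunnelSum_succ]
    refine sum_of_injOn (fun p => a + 2 * p.1 + 2) ?_ ?_ ?_ ?_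
    · intro p hp q hq hpq
      rw [mem_coe, HasAntidiagonal.mem_antidiagonal] at hp hq
      simp only at hpq
      ext <;> omega
    · intro p hp
      rw [mem_coe, HasAntidiagonal.mem_antidiagonal] at hp
      simp only [coe_Icc, Set.mem_Icc]
      omega
    · intro e _ he
      by_contra h
      obtain ⟨k, rfl⟩ := exists_eq_of_archSum_ne_zero (left_ne_zero_of_mul h)
      obtain ⟨l, hl⟩ := exists_eq_of_pathSum_ne_zero (right_ne_zero_of_mul h)
      exact he ⟨(k, l), mem_coe.2 (mem_antidiagonal.2 (by omega)), rfl⟩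
    · intro p hp
      rw [HasAntidiagonal.mem_antidiagonal] at hp
      have hp' : a + 2 * (n + 1 : ℕ) = a + 2 * p.1 + 2 + 2 * p.2 := by omega
      have harch : a + 2 * p.1 + 2 - 1 = a + 1 + 2 * p.1 := by ring
      rw [archSum_apply, harch, pathSum_add_two_mul, hp', pathSum_add_two_mul, mul_comm (W _ _)]
  · trans 0
    · by_contra h
      obtain ⟨n, rfl⟩ := exists_eq_of_pathSum_ne_zero h
      exact hab ⟨n - 1, by cases n <;> simp at hne ⊢⟩
    · refine (sum_eq_zero fun e _ => ?_).symm
      by_contra h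
      obtain ⟨k, rfl⟩ := exists_eq_of_archSum_ne_zero (left_ne_zero_of_mul h)
      obtain ⟨l, rfl⟩ := exists_eq_of_pathSum_ne_zero (right_ne_zero_of_mul h)
      exact hab ⟨k + l, by push_cast; ring⟩

theorem pathSum_eq_one_add_mul_archSum : pathSum W = 1 + pathSum W * archSum W := by
  rw [(commute_of_eq_one_add_mul (archSum_self W) (pathSum_eq_one_add_archSum_mul W)).eq]
  exact pathSum_eq_one_add_archSum_mul W

theorem pathSum_eq_one_add_archSum_add :
    pathSum W = 1 + archSum W + archSum W * (pathSum W * archSum W) := by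
  conv_lhs => rw [pathSum_eq_one_add_archSum_mul, pathSum_eq_one_add_mul_archSum, mul_add, mul_one]
  rw [add_assoc]

end PathSum

section Shift

variable {R : Type*} [CommSemiring R] {a b : ℤ} {c : R} {f g h : IncidenceAlgebra R ℤ}

theorem mul_apply_eq_mul_of_left (H : ∀ e ≤ b, g a e * f e b = c * (h (a + 1) e * f e b)) :
    (g * f) a b = c * (h * f) (a + 1) b := by
  rw [IncidenceAlgebra.mul_apply, IncidenceAlgebra.mul_apply, mul_sum,
    ← sum_subset (Icc_subset_Icc_left (by omega : a ≤ a + 1)) fun e he he' => ?_]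
  · refine sum_congr rfl fun e he => ?_
    exact H e (mem_Icc.1 he).2
  · simp only [mem_Icc] at he he'
    rw [H e he.2, IncidenceAlgebra.apply_eq_zero_of_not_le (by omega), zero_mul, mul_zero]

theorem mul_apply_eq_mul_of_right (H : ∀ e ≥ a, g a e * f e b = c * (g a e * h e (b - 1))) :
    (g * f) a b = c * (g * h) a (b - 1) := by
  rw [IncidenceAlgebra.mul_apply, IncidenceAlgebra.mul_apply, mul_sum,
    ← sum_subset (Icc_subset_Icc_right (by omega : b - 1 ≤ b)) fun e he he' => ?_]
  · refine sum_congr rfl fun e he => ?_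
    exact H e (mem_Icc.1 he).1
  · simp only [mem_Icc] at he he'
    rw [H e he.1, IncidenceAlgebra.apply_eq_zero_of_not_le (a := e) (by omega), mul_zero, mul_zero]

variable (s : ℤ → R)

/-- A single step `j, j + 1`, weighted by `s j`. -/
def stepSum : IncidenceAlgebra R ℤ where
  toFun a b := if b = a + 1 then s a else 0
  eq_zero_of_not_le' _ _ h := if_neg (by omega)

theorem stepSum_apply (a b : ℤ) : stepSum s a b = if b = a + 1 then s a else 0 :=
  rfl

theorem stepSum_mul_apply (a b : ℤ) : (stepSum s * f) a b = s a * f (a + 1) b := by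
  rw [mul_apply_eq_mul_of_left (h := 1) (c := s a), one_mul]
  intro e _
  simp [stepSum_apply, IncidenceAlgebra.one_apply, eq_comm]

theorem mul_stepSum_apply (a b : ℤ) : (f * stepSum s) a b = s (b - 1) * f a (b - 1) := by
  rw [mul_apply_eq_mul_of_right (h := 1) (c := s (b - 1)), mul_one]
  intro e _
  obtain rfl | hne := eq_or_ne e (b - 1)
  · simp [stepSum_apply, mul_comm]
  · rw [stepSum_apply, if_neg (by omega), IncidenceAlgebra.one_apply, if_neg hne, mul_zero,
      mul_zero]

end Shift

/-- Weights for the parts of a tunnel from `a` to `b`. The end further from the origin has weight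
`left a` or `right b`, the unit step of the path at the other end has weight `step (b - 1)` or
`step a`, and a tunnel centred at the origin has weight `centre`. -/
structure TunnelWeight (R : Type*) where
  left : ℤ → R
  right : ℤ → R
  step : ℤ → R
  centre : R

namespace TunnelWeight

variable {R : Type*} [CommSemiring R] (w : TunnelWeight R) {a b : ℤ}

/-- The weight of a tunnel from `a` to `b`. -/
def tunnel (a b : ℤ) : R :=
  if a + b < 0 then w.left a * w.step (b - 1)
  else if a + b = 0 then w.centre
  else w.step a * w.right b

theorem archSum_of_add_neg (h : a + b < 0) :
    archSum w.tunnel a b = w.left a * (pathSum w.tunnel * stepSum w.step) (a + 1) b := by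
  rw [archSum_apply, tunnel, if_pos h, mul_stepSum_apply, mul_assoc]

theorem archSum_of_add_pos (h : 0 < a + b) :
    archSum w.tunnel a b = w.right b * (stepSum w.step * pathSum w.tunnel) a (b - 1) := by
  rw [archSum_apply, tunnel, if_neg h.not_gt, if_neg h.ne', stepSum_mul_apply, mul_left_comm,
    mul_assoc]

theorem archSum_neg_self (b : ℤ) :
    archSum w.tunnel (-b) b = w.centre * pathSum w.tunnel (-b + 1) (b - 1) := by
  simp [archSum_apply, tunnel]

/-- Sequences of `k + 1` weighted Dyck paths separated by `k` marked unit steps. -/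
noncomputable def markedSum (k : ℕ) : IncidenceAlgebra R ℤ :=
  pathSum w.tunnel * (stepSum w.step * pathSum w.tunnel) ^ k

theorem markedSum_zero : w.markedSum 0 = pathSum w.tunnel := by
  rw [markedSum, pow_zero, mul_one]

theorem markedSum_succ (k : ℕ) :
    w.markedSum (k + 1) = w.markedSum k * stepSum w.step * pathSum w.tunnel := by
  simp only [markedSum, pow_succ, mul_assoc]

theorem markedSum_succ' (k : ℕ) :
    w.markedSum (k + 1) = pathSum w.tunnel * stepSum w.step * w.markedSum k := by
  simp only [markedSum, pow_succ', mul_assoc]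

theorem markedSum_succ_self (k : ℕ) (a : ℤ) : w.markedSum (k + 1) a a = 0 := by
  simp [markedSum_succ', IncidenceAlgebra.mul_apply, stepSum_apply]

theorem markedSum_succ_of_add_neg (k : ℕ) (h : a + b < 0) :
    w.markedSum (k + 1) a b =
      w.step a * w.markedSum k (a + 1) b + w.left a * w.markedSum (k + 2) (a + 1) b := by
  have hfirst : w.markedSum (k + 1) =
      stepSum w.step * w.markedSum k + archSum w.tunnel * w.markedSum (k + 1) := by
    rw [markedSum_succ', mul_assoc]
    conv_lhs => rw [pathSum_eq_one_add_archSum_mul, add_mul, one_mul, mul_assoc]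
  rw [hfirst, IncidenceAlgebra.add_apply, stepSum_mul_apply, markedSum_succ' _ (k + 1)]
  congr 1
  refine mul_apply_eq_mul_of_left fun e he => ?_
  rw [w.archSum_of_add_neg (by omega), mul_assoc]

theorem markedSum_succ_neg (k : ℕ) (b : ℤ) :
    w.markedSum (k + 1) (-b) b =
      w.step (b - 1) * w.markedSum k (-b) (b - 1) +
        w.right b * w.markedSum (k + 2) (-b) (b - 1) := by
  have hlast : w.markedSum (k + 1) =
      w.markedSum k * stepSum w.step + w.markedSum (k + 1) * archSum w.tunnel := by
    rw [markedSum_succ]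
    conv_lhs => rw [pathSum_eq_one_add_mul_archSum, mul_add, mul_one, ← mul_assoc]
  rw [hlast, IncidenceAlgebra.add_apply, mul_stepSum_apply, markedSum_succ _ (k + 1),
    mul_assoc (w.markedSum (k + 1))]
  congr 1
  refine mul_apply_eq_mul_of_right fun e he => ?_
  obtain rfl | hne := eq_or_ne e (-b)
  · rw [markedSum_succ_self, zero_mul, zero_mul, mul_zero]
  · rw [w.archSum_of_add_pos (by omega), mul_left_comm]

theorem archSum_mul_pathSum_mul_archSum_neg (b : ℤ) :
    (archSum w.tunnel * (pathSum w.tunnel * archSum w.tunnel)) (-b) b =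
      w.left (-b) * w.right b * w.markedSum 2 (-b + 1) (b - 1) := by
  have hfirst : (archSum w.tunnel * (pathSum w.tunnel * archSum w.tunnel)) (-b) b =
      w.left (-b) * (w.markedSum 1 * archSum w.tunnel) (-b + 1) b := by
    rw [markedSum_succ', markedSum_zero, mul_assoc (pathSum w.tunnel * stepSum w.step)]
    refine mul_apply_eq_mul_of_left fun e he => ?_
    obtain rfl | hne := eq_or_ne e b
    · simp [IncidenceAlgebra.mul_apply, archSum_self]
    · rw [w.archSum_of_add_neg (by omega), mul_assoc]
  have hlast : (w.markedSum 1 * archSum w.tunnel) (-b + 1) b =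
      w.right b * w.markedSum 2 (-b + 1) (b - 1) := by
    rw [markedSum_succ w 1, mul_assoc (w.markedSum 1)]
    refine mul_apply_eq_mul_of_right fun e he => ?_
    rw [w.archSum_of_add_pos (by omega), mul_left_comm]
  rw [hfirst, hlast, mul_assoc]

theorem markedSum_zero_neg (hb : b ≠ 0) :
    w.markedSum 0 (-b) b =
      w.centre * w.markedSum 0 (-b + 1) (b - 1) +
        w.left (-b) * w.right b * w.markedSum 2 (-b + 1) (b - 1) := by
  rw [← archSum_mul_pathSum_mul_archSum_neg, markedSum_zero, ← archSum_neg_self]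
  conv_lhs => rw [pathSum_eq_one_add_archSum_add]
  rw [IncidenceAlgebra.add_apply, IncidenceAlgebra.add_apply, IncidenceAlgebra.one_apply,
    if_neg (by omega), zero_add]

end TunnelWeight

section Words

variable {n : ℕ}

/-- The height increment of a letter of a two-coloured Motzkin path: the first component says
whether the letter opens an arc, the second one whether it closes an arc. -/
def stepHeight (c : Bool × Bool) : ℤ :=
  (if c.1 then 1 else 0) - if c.2 then 1 else 0

/-- The height reached before the letter `k` by the path with letters `f` started at height `h`. -/
def pathHeight (h : ℤ) (f : Fin n → Bool × Bool) (k : ℕ) : ℤ :=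
  h + ∑ i : Fin n with i.val < k, stepHeight (f i)

theorem pathHeight_zero (h : ℤ) (f : Fin n → Bool × Bool) : pathHeight h f 0 = h := by
  simp [pathHeight]

theorem pathHeight_succ (h : ℤ) (f : Fin n → Bool × Bool) (k : Fin n) :
    pathHeight h f (k + 1) = pathHeight h f k + stepHeight (f k) := by
  have hinsert : univ.filter (fun i : Fin n => i.val < k + 1) =
      insert k (univ.filter fun i : Fin n => i.val < k) := by
    ext i
    simp only [mem_filter, mem_univ, true_and, mem_insert, Fin.ext_iff]
    omega
  rw [pathHeight, pathHeight, hinsert, sum_insert (by simp)]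
  ring

theorem pathHeight_cons_succ (h : ℤ) (c : Bool × Bool) (f : Fin n → Bool × Bool) (k : ℕ) :
    pathHeight h (Fin.cons c f : Fin (n + 1) → Bool × Bool) (k + 1) =
      pathHeight (h + stepHeight c) f k := by
  simp only [pathHeight, sum_filter, Fin.sum_univ_succ, Fin.cons_zero, Fin.cons_succ, Fin.val_zero,
    Fin.val_succ, Nat.zero_lt_succ, if_true, Nat.add_lt_add_iff_right]
  ring

theorem pathHeight_zero_eq (f : Fin n → Bool × Bool) (k : ℕ) :
    pathHeight 0 f k = #{i : Fin n | i.val < k ∧ (f i).1} - #{i : Fin n | i.val < k ∧ (f i).2} := by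
  simp only [pathHeight, stepHeight, sum_sub_distrib, ← sum_filter, filter_filter, sum_const,
    nsmul_eq_mul, mul_one, zero_add]

theorem pathHeight_nonneg {f : Fin n → Bool × Bool} (hf : ∀ k, (f k).2 → 0 < pathHeight 0 f k)
    {k : ℕ} (hk : k ≤ n) : 0 ≤ pathHeight 0 f k := by
  induction k with
  | zero => exact (pathHeight_zero 0 f).ge
  | succ k ih =>
    have hsucc := pathHeight_succ 0 f ⟨k, hk⟩
    have hpos := hf ⟨k, hk⟩
    simp only [stepHeight] at hsucc hpos
    grind [ih (by omega)]

namespace TunnelWeight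

variable {R : Type*} [CommSemiring R] (w : TunnelWeight R)

/-- The weight of a letter read at height `h`, when `b` letters remain to be read. Closing an arc
at height `0` is forbidden; a letter which neither opens nor closes an arc at height `0` is a
centred tunnel. -/
def letter (b h : ℤ) (c : Bool × Bool) : R :=
  if c.2 ∧ h ≤ 0 then 0
  else if ¬ c.1 ∧ ¬ c.2 ∧ h = 0 then w.centre
  else (if c.1 then w.left (-b) else w.step (-b)) * if c.2 then w.step (b - 1) else w.right b

/-- The weight of a two-coloured Motzkin path started at height `h`; it vanishes unless the path
ends at height `0`. -/
def word (h : ℤ) (f : Fin n → Bool × Bool) : R :=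
  (∏ k : Fin n, w.letter (n - k) (pathHeight h f k) (f k)) * if pathHeight h f n = 0 then 1 else 0

theorem word_cons (h : ℤ) (c : Bool × Bool) (f : Fin n → Bool × Bool) :
    w.word h (Fin.cons c f : Fin (n + 1) → Bool × Bool) =
      w.letter (n + 1 : ℕ) h c * w.word (h + stepHeight c) f := by
  simp only [word, Fin.prod_univ_succ, Fin.cons_zero, Fin.cons_succ, Fin.val_zero, Fin.val_succ,
    pathHeight_zero, pathHeight_cons_succ, mul_assoc]
  simp

theorem sum_word_succ (n : ℕ) (h : ℤ) :
    ∑ f : Fin (n + 1) → Bool × Bool, w.word h f =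
      ∑ c : Bool × Bool,
        w.letter (n + 1 : ℕ) h c * ∑ f : Fin n → Bool × Bool, w.word (h + stepHeight c) f := by
  rw [← Fintype.sum_equiv (Fin.consEquiv fun _ : Fin (n + 1) => Bool × Bool)
    (fun p => w.word h (Fin.cons p.1 p.2 : Fin (n + 1) → Bool × Bool)) _ fun _ => rfl]
  simp only [word_cons, Fintype.sum_prod_type, ← mul_sum]

theorem markedSum_two_mul_add_two (k : ℕ) {b : ℤ} :
    w.markedSum (2 * k + 2) (-b) b =
      w.step (b - 1) * (w.step (-b) * w.markedSum (2 * k) (-b + 1) (b - 1) +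
        w.left (-b) * w.markedSum (2 * k + 2) (-b + 1) (b - 1)) +
      w.right b * (w.step (-b) * w.markedSum (2 * k + 2) (-b + 1) (b - 1) +
        w.left (-b) * w.markedSum (2 * k + 4) (-b + 1) (b - 1)) := by
  rw [markedSum_succ_neg, w.markedSum_succ_of_add_neg (2 * k) (by omega),
    w.markedSum_succ_of_add_neg (2 * k + 2) (by omega)]

theorem word_fin_zero (h : ℤ) (f : Fin 0 → Bool × Bool) : w.word h f = if h = 0 then 1 else 0 := by
  simp [word, pathHeight]

theorem letter_of_pos {b h : ℤ} (hh : 0 < h) (c : Bool × Bool) :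
    w.letter b h c =
      (if c.1 then w.left (-b) else w.step (-b)) * if c.2 then w.step (b - 1) else w.right b := by
  rw [letter, if_neg (by omega), if_neg (by omega)]

/-- The first letter of a two-coloured Motzkin path records what happens at the ends `-m` and `m`
of a sequence of Dyck paths. -/
theorem sum_word (m k : ℕ) :
    ∑ f : Fin m → Bool × Bool, w.word k f = w.markedSum (2 * k) (-m) m := by
  induction m generalizing k with
  | zero =>
    rcases k with _ | k
    · simp [word_fin_zero, markedSum_zero, pathSum_self]
    · rw [Nat.cast_zero, neg_zero, Nat.mul_add, markedSum_succ_self]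
      exact sum_eq_zero fun f _ => (w.word_fin_zero _ f).trans (if_neg (by omega))
  | succ m ih =>
    have hleft : -((m + 1 : ℕ) : ℤ) + 1 = -m := by omega
    have hright : ((m + 1 : ℕ) : ℤ) - 1 = m := by omega
    simp only [sum_word_succ, Fintype.sum_prod_type, Fintype.sum_bool]
    rcases k with _ | k
    · have hstay : ∑ f : Fin m → Bool × Bool, w.word (0 + 0) f = w.markedSum 0 (-m) m := ih 0
      have hup : ∑ f : Fin m → Bool × Bool, w.word (0 + 1) f = w.markedSum 2 (-m) m := ih 1
      rw [mul_zero, markedSum_zero_neg _ (by omega), hleft, hright, ← hstay, ← hup]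
      simp [letter, stepHeight, add_comm]
    · have hdown : ∑ f : Fin m → Bool × Bool, w.word ((k + 1 : ℕ) + -1) f =
          w.markedSum (2 * k) (-m) m := by
        rw [← ih k]
        simp
      have hstay : ∑ f : Fin m → Bool × Bool, w.word ((k + 1 : ℕ) + 0) f =
          w.markedSum (2 * k + 2) (-m) m := by
        rw [add_zero, ih (k + 1), Nat.mul_add]
      have hup : ∑ f : Fin m → Bool × Bool, w.word ((k + 1 : ℕ) + 1) f =
          w.markedSum (2 * k + 4) (-m) m := ih (k + 2)
      rw [Nat.mul_add, markedSum_two_mul_add_two, hleft, hright, ← hdown, ← hstay, ← hup]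
      simp only [letter_of_pos _ (Int.natCast_pos.2 k.succ_pos), stepHeight, if_true, if_false,
        Bool.false_eq_true, sub_self, sub_zero, zero_sub, hright]
      ring

end TunnelWeight

end Words

section Excedances

variable {n : ℕ} (σ : Perm (Fin n))

/-- The number of arcs `i ↦ σ i` that go up across the cut between `k - 1` and `k`. -/
def cutHeight (k : ℕ) : ℕ :=
  #{i : Fin n | i.val < k ∧ k ≤ σ i}

theorem cutHeight_eq_card_down (k : ℕ) : cutHeight σ k = #{i : Fin n | k ≤ i ∧ (σ i).val < k} := by
  have hpos : #{i : Fin n | i.val < k} =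
      cutHeight σ k + #{i : Fin n | i.val < k ∧ (σ i).val < k} := by
    rw [cutHeight, ← card_filter_add_card_filter_not (fun i : Fin n => k ≤ σ i), filter_filter,
      filter_filter]
    simp only [not_le]
  have hval : #{i : Fin n | (σ i).val < k} =
      #{i : Fin n | k ≤ i ∧ (σ i).val < k} + #{i : Fin n | i.val < k ∧ (σ i).val < k} := by
    rw [← card_filter_add_card_filter_not (fun i : Fin n => k ≤ i), filter_filter, filter_filter]
    simp only [not_le, and_comm]
  have heq : #{i : Fin n | (σ i).val < k} = #{i : Fin n | i.val < k} :=
    card_equiv σ (by simp)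
  omega

theorem sum_cutHeight_eq_sum_apply_sub :
    ∑ k : Fin n, cutHeight σ (k + 1) = ∑ i, ((σ i).val - i.val) := by
  simp only [cutHeight, card_filter]
  rw [sum_comm]
  refine sum_congr rfl fun i _ => ?_
  rw [← card_filter, ← Fin.card_Ico]
  congr 1
  ext k
  simp only [mem_filter, mem_univ, true_and, mem_Ico, Fin.le_def, Fin.lt_def]
  omega

theorem sum_cutHeight_eq_sum_sub_apply :
    ∑ k : Fin n, cutHeight σ (k + 1) = ∑ i, (i.val - (σ i).val) := by
  simp only [cutHeight_eq_card_down, card_filter]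
  rw [sum_comm]
  refine sum_congr rfl fun i _ => ?_
  rw [← card_filter, ← Fin.card_Ico]
  congr 1
  ext k
  simp only [mem_filter, mem_univ, true_and, mem_Ico, Fin.le_def, Fin.lt_def]
  omega

theorem sum_abs_apply_sub :
    ∑ i, |((σ i : ℕ) : ℤ) - (i : ℕ)| = 2 * ((∑ k : Fin n, cutHeight σ (k + 1) : ℕ) : ℤ) := by
  have habs (i : Fin n) : |((σ i : ℕ) : ℤ) - (i : ℕ)| =
      (((σ i).val - i.val : ℕ) : ℤ) + ((i.val - (σ i).val : ℕ) : ℤ) := by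
    rw [Int.abs_eq_natAbs]
    omega
  simp only [habs, sum_add_distrib]
  rw [two_mul]
  nth_rw 1 [sum_cutHeight_eq_sum_apply_sub]
  rw [sum_cutHeight_eq_sum_sub_apply]
  push_cast
  rfl

variable {σ}

theorem exists_down_of_up {k : ℕ} {i : Fin n} (hi : i.val < k) (hk : k ≤ σ i) :
    ∃ j : Fin n, k ≤ j ∧ (σ j).val < k := by
  have hpos : 0 < cutHeight σ k := card_pos.2 ⟨i, by simp [hi, hk]⟩
  rw [cutHeight_eq_card_down, card_pos] at hpos
  obtain ⟨j, hj⟩ := hpos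
  exact ⟨j, by simpa using hj⟩

theorem exists_up_of_down {k : ℕ} {j : Fin n} (hj : k ≤ j) (hk : (σ j).val < k) :
    ∃ i : Fin n, i.val < k ∧ k ≤ σ i := by
  have hpos : 0 < #{i : Fin n | k ≤ i ∧ (σ i).val < k} := card_pos.2 ⟨j, by simp [hj, hk]⟩
  rw [← cutHeight_eq_card_down, cutHeight, card_pos] at hpos
  obtain ⟨i, hi⟩ := hpos
  exact ⟨i, by simpa using hi⟩

/-- A descent between two excedances, or between two non-excedances, extends to a pattern 321 by an
arc crossing the appropriate cut in the other direction. -/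
theorem apply_lt_apply_of_avoids_p321 (hσ : Avoids σ p321) {i j : Fin n}
    (h : i < σ i ↔ j < σ j) (hij : i < j) : σ i < σ j := by
  rw [avoids_p321_iff] at hσ
  by_contra hc
  have hdesc : σ j < σ i := lt_of_le_of_ne (not_lt.1 hc) fun h => hij.ne (σ.injective h.symm)
  by_cases hj : j < σ j
  · obtain ⟨l, hl, hσl⟩ := exists_down_of_up (σ := σ) (k := j + 1) (i := i) (by omega) (by omega)
    exact hσ i j l hij (by omega) ⟨by omega, hdesc⟩
  · obtain ⟨l, hl, hσl⟩ := exists_up_of_down (σ := σ) (k := i) (j := j) (by omega) (by omega)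
    have hne : σ l ≠ σ i := fun h => hl.ne (congrArg Fin.val (σ.injective h))
    exact hσ l i j (by omega) hij ⟨hdesc, by omega⟩

theorem cutHeight_eq_zero_of_apply_eq_self (hσ : Avoids σ p321) {k : Fin n} (hk : σ k = k) :
    cutHeight σ k = 0 := by
  rw [cutHeight_eq_card_down, card_eq_zero, filter_eq_empty_iff]
  rintro j - ⟨hj, hσj⟩
  have hne : k ≠ j := by
    rintro rfl
    omega
  have := apply_lt_apply_of_avoids_p321 hσ (i := k) (j := j)
    ⟨fun _ => by omega, fun _ => by omega⟩ (lt_of_le_of_ne hj hne)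
  omega

theorem apply_eq_self_iff (hσ : Avoids σ p321) (k : Fin n) :
    σ k = k ↔ σ k ≤ k ∧ cutHeight σ k = 0 := by
  constructor
  · intro hk
    exact ⟨hk.le, cutHeight_eq_zero_of_apply_eq_self hσ hk⟩
  · rintro ⟨hle, hcut⟩
    rw [cutHeight_eq_card_down, card_eq_zero, filter_eq_empty_iff] at hcut
    have := hcut (mem_univ k)
    omega

theorem crs_eq_sum_card_add_card (σ : Perm (Fin n)) :
    crs σ = ∑ j, (#{i | i < j ∧ j < σ i ∧ σ i < σ j} + #{l | σ j < σ l ∧ σ l ≤ j ∧ j < l}) := by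
  simp only [crs, card_filter, sum_add_distrib]
  rw [← Fintype.sum_prod_type_right', ← Fintype.sum_prod_type', ← sum_add_distrib]
  refine sum_congr rfl fun q _ => ?_
  simp only [Fin.lt_def, Fin.le_def]
  split_ifs <;> first | rfl | omega

theorem cutHeight_succ_of_lt_apply (hσ : Avoids σ p321) {j : Fin n} (hj : j < σ j) :
    cutHeight σ (j + 1) = #{i | i < j ∧ j < σ i ∧ σ i < σ j} + 1 := by
  have hinsert : ({i | i.val < j + 1 ∧ j + 1 ≤ (σ i).val} : Finset (Fin n)) =
      insert j ({i | i < j ∧ j < σ i ∧ σ i < σ j} : Finset (Fin n)) := by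
    ext i
    simp only [mem_filter, mem_univ, true_and, mem_insert]
    constructor
    · rintro ⟨hij, hi⟩
      rcases eq_or_ne i j with rfl | hne
      · exact .inl rfl
      · exact .inr ⟨by omega, by omega,
          apply_lt_apply_of_avoids_p321 hσ ⟨fun _ => by omega, fun _ => by omega⟩ (by omega)⟩
    · rintro (rfl | hi) <;> omega
  rw [cutHeight, hinsert, card_insert_of_notMem (by simp)]

theorem cutHeight_succ_of_apply_le (hσ : Avoids σ p321) {j : Fin n} (hj : σ j ≤ j) :
    cutHeight σ (j + 1) = #{l | σ j < σ l ∧ σ l ≤ j ∧ j < l} := by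
  rw [cutHeight_eq_card_down]
  congr 1
  ext l
  simp only [mem_filter, mem_univ, true_and]
  constructor
  · rintro ⟨hl, hσl⟩
    exact ⟨apply_lt_apply_of_avoids_p321 hσ ⟨fun _ => by omega, fun _ => by omega⟩ (by omega),
      by omega, by omega⟩
  · omega

theorem sum_cutHeight (hσ : Avoids σ p321) : ∑ k : Fin n, cutHeight σ (k + 1) = crs σ + exc σ := by
  rw [crs_eq_sum_card_add_card, exc, card_filter, ← sum_add_distrib]
  refine sum_congr rfl fun j _ => ?_
  split_ifs with hj
  · have hempty : ({l | σ j < σ l ∧ σ l ≤ j ∧ j < l} : Finset (Fin n)) = ∅ :=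
      filter_eq_empty_iff.2 fun l _ => by omega
    rw [cutHeight_succ_of_lt_apply hσ hj, hempty, card_empty, add_zero]
  · have hempty : ({i | i < j ∧ j < σ i ∧ σ i < σ j} : Finset (Fin n)) = ∅ :=
      filter_eq_empty_iff.2 fun i _ => by omega
    rw [cutHeight_succ_of_apply_le hσ (by omega), hempty, card_empty, zero_add, add_zero]

/-- The positions and the values of the excedances of a permutation, as a two-coloured Motzkin path
in which every excedance is an arc. -/
def excWord (σ : Perm (Fin n)) (k : Fin n) : Bool × Bool :=
  (k < σ k, σ.symm k < k)

theorem pathHeight_excWord (σ : Perm (Fin n)) (k : ℕ) :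
    pathHeight 0 (excWord σ) k = cutHeight σ k := by
  have hpos : #{i : Fin n | i.val < k ∧ i < σ i} =
      cutHeight σ k + #{i : Fin n | (σ i).val < k ∧ i < σ i} := by
    rw [cutHeight, ← card_filter_add_card_filter_not (fun i : Fin n => k ≤ σ i), filter_filter,
      filter_filter]
    congr 2 <;> ext i <;> simp only [mem_filter, mem_univ, true_and] <;> omega
  have hval : #{i : Fin n | (σ i).val < k ∧ i < σ i} = #{i : Fin n | i.val < k ∧ σ.symm i < i} :=
    card_equiv σ (by simp)
  rw [pathHeight_zero_eq]
  simp only [excWord, decide_eq_true_eq]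
  omega

theorem excWord_injOn : Set.InjOn (excWord (n := n)) {σ | Avoids σ p321} := by
  intro σ hσ τ hτ h
  have hpos : ∀ i, i < σ i ↔ i < τ i := fun i => by
    simpa [excWord] using congrArg Prod.fst (congrFun h i)
  have hval : ∀ i, σ.symm i < i ↔ τ.symm i < i := fun i => by
    simpa [excWord] using congrArg Prod.snd (congrFun h i)
  have hnot_lt : ∀ (σ τ : Perm (Fin n)), Avoids τ p321 → (∀ i, i < σ i ↔ i < τ i) →
      (∀ i, σ.symm i < i ↔ τ.symm i < i) → ∀ i, (∀ j < i, σ j = τ j) → ¬ σ i < τ i := by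
    intro σ τ hτ hpos hval i ih hlt
    have hj : τ (τ.symm (σ i)) = σ i := τ.apply_symm_apply _
    have hval_i := hval (σ i)
    rw [σ.symm_apply_apply] at hval_i
    have hj_lt : τ.symm (σ i) < i := by
      by_contra hc
      rcases (not_lt.1 hc).eq_or_lt with he | hl
      · rw [← he] at hj
        exact hlt.ne' hj
      · have := apply_lt_apply_of_avoids_p321 hτ (by rw [hj, ← hval_i, hpos]) hl
        omega
    rw [← ih _ hj_lt] at hj
    exact hj_lt.ne (σ.injective hj)
  ext i
  induction i using WellFoundedLT.induction with
  | ind i ih =>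
    have heq : ∀ j < i, σ j = τ j := fun j hj => Fin.ext (ih j hj)
    have hle := hnot_lt σ τ hτ hpos hval i heq
    have hge := hnot_lt τ σ hσ (fun i => (hpos i).symm) (fun i => (hval i).symm) i
      fun j hj => (heq j hj).symm
    omega

theorem exists_perm_of_card_eq {α : Type*} [Fintype α] [LinearOrder α] {p q : α → Prop}
    [DecidablePred p] [DecidablePred q] (h : #{i | p i} = #{i | q i}) :
    ∃ σ : Perm α, (∀ i, q (σ i) ↔ p i) ∧ ∀ i j, (p i ↔ p j) → (σ i < σ j ↔ i < j) := by
  have h' : Fintype.card {i // ¬ p i} = Fintype.card {i // ¬ q i} := by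
    rw [Fintype.card_subtype_compl, Fintype.card_subtype_compl, Fintype.card_subtype,
      Fintype.card_subtype, h]
  let e : {i // p i} ≃o {i // q i} := (Fintype.orderIsoFinOfCardEq _ rfl).symm.trans
    (Fintype.orderIsoFinOfCardEq _ (by rw [Fintype.card_subtype, Fintype.card_subtype, h]))
  let e' : {i // ¬ p i} ≃o {i // ¬ q i} := (Fintype.orderIsoFinOfCardEq _ rfl).symm.trans
    (Fintype.orderIsoFinOfCardEq _ h'.symm)
  have hp : ∀ (i) (hi : p i), subtypeCongr e.toEquiv e'.toEquiv i = e ⟨i, hi⟩ := fun i hi => by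
    simp [subtypeCongr, hi]
  have hn : ∀ (i) (hi : ¬ p i), subtypeCongr e.toEquiv e'.toEquiv i = e' ⟨i, hi⟩ := fun i hi => by
    simp [subtypeCongr, hi]
  refine ⟨subtypeCongr e.toEquiv e'.toEquiv, fun i => ?_, fun i j hij => ?_⟩
  · by_cases hi : p i
    · rw [hp i hi]
      exact iff_of_true (e ⟨i, hi⟩).2 hi
    · rw [hn i hi]
      exact iff_of_false (e' ⟨i, hi⟩).2 hi
  · by_cases hi : p i
    · rw [hp i hi, hp j (hij.1 hi), Subtype.coe_lt_coe, e.lt_iff_lt, Subtype.mk_lt_mk]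
    · rw [hn i hi, hn j (mt hij.2 hi), Subtype.coe_lt_coe, e'.lt_iff_lt, Subtype.mk_lt_mk]

theorem avoids_p321_of_lt_iff_lt {p : Fin n → Prop}
    (h : ∀ i j, (p i ↔ p j) → (σ i < σ j ↔ i < j)) : Avoids σ p321 := by
  rw [avoids_p321_iff]
  rintro i j k hij hjk ⟨hkj, hji⟩
  have hcolour : (p i ↔ p j) ∨ (p j ↔ p k) ∨ (p i ↔ p k) := by tauto
  rcases hcolour with hp | hp | hp
  · exact hji.not_gt ((h _ _ hp).2 hij)
  · exact hkj.not_gt ((h _ _ hp).2 hjk)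
  · exact (hkj.trans hji).not_gt ((h _ _ hp).2 (hij.trans hjk))

variable {f : Fin n → Bool × Bool}

theorem card_filter_lt_of_lt_iff_lt {p q : Fin n → Prop} [DecidablePred p] [DecidablePred q]
    (hσ : ∀ i, q (σ i) ↔ p i) (hmono : ∀ i j, (p i ↔ p j) → (σ i < σ j ↔ i < j)) {i : Fin n}
    (hi : p i) : #{j : Fin n | j.val < i.val ∧ p j} = #{j : Fin n | j.val < (σ i).val ∧ q j} := by
  refine card_equiv σ fun j => ?_
  simp only [mem_filter, mem_univ, true_and, hσ, Fin.val_fin_lt]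
  exact and_congr_left fun hj => (hmono j i (iff_of_true hj hi)).symm

theorem lt_apply_of_fst (hf : ∀ k, (f k).2 → 0 < pathHeight 0 f k)
    (hσ : ∀ i, (f (σ i)).2 ↔ (f i).1) (hmono : ∀ i j, ((f i).1 ↔ (f j).1) → (σ i < σ j ↔ i < j))
    {i : Fin n} (hi : (f i).1) : i < σ i := by
  have hcard := card_filter_lt_of_lt_iff_lt (q := fun j => (f j).2) hσ hmono hi
  have hpos := hf (σ i) ((hσ i).2 hi)
  rw [pathHeight_zero_eq] at hpos
  by_contra hc
  have hle : #{j : Fin n | j.val < (σ i).val ∧ (f j).1} ≤ #{j : Fin n | j.val < i.val ∧ (f j).1} :=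
    card_le_card <| monotone_filter_right _ fun j _ h => ⟨by omega, h.2⟩
  omega

theorem apply_le_of_not_fst (hf : ∀ k, (f k).2 → 0 < pathHeight 0 f k)
    (hσ : ∀ i, (f (σ i)).2 ↔ (f i).1) (hmono : ∀ i j, ((f i).1 ↔ (f j).1) → (σ i < σ j ↔ i < j))
    {i : Fin n} (hi : ¬ (f i).1) : σ i ≤ i := by
  by_contra! hc
  have hcard := card_filter_lt_of_lt_iff_lt (q := fun j => ¬ (f j).2) (fun i => not_congr (hσ i))
    (fun i j h => hmono i j (not_iff_not.1 h)) hi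
  have hnonneg := pathHeight_nonneg hf (σ i).is_lt.le
  rw [pathHeight_zero_eq] at hnonneg
  have hlt : #{j : Fin n | j.val < i.val ∧ ¬ (f j).1} <
      #{j : Fin n | j.val < (σ i).val ∧ ¬ (f j).1} :=
    card_lt_card <| (ssubset_iff_of_subset <|
      monotone_filter_right _ fun j _ h => ⟨by omega, h.2⟩).2 ⟨i, by simp [hc, hi], by simp⟩
  have hfst := card_filter_add_card_filter_not (s := {j : Fin n | j.val < σ i}) fun j => (f j).1
  have hsnd := card_filter_add_card_filter_not (s := {j : Fin n | j.val < σ i}) fun j => (f j).2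
  simp only [filter_filter] at hfst hsnd
  omega

theorem exists_excWord_eq (hf : ∀ k, (f k).2 → 0 < pathHeight 0 f k) (hn : pathHeight 0 f n = 0) :
    ∃ σ : Perm (Fin n), Avoids σ p321 ∧ excWord σ = f := by
  have hcard : #{i | (f i).1} = #{i | (f i).2} := by
    rw [pathHeight_zero_eq] at hn
    simp only [Fin.is_lt, true_and] at hn
    omega
  obtain ⟨σ, hσ, hmono⟩ := exists_perm_of_card_eq hcard
  have hlt {i : Fin n} : i < σ i ↔ (f i).1 :=
    ⟨fun h => by_contra fun hi => (apply_le_of_not_fst hf hσ hmono hi).not_gt h,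
      lt_apply_of_fst hf hσ hmono⟩
  refine ⟨σ, avoids_p321_of_lt_iff_lt hmono, funext fun k => ?_⟩
  have hsymm : σ.symm k < k ↔ (f k).2 := by
    have := hσ (σ.symm k)
    rwa [← hlt, σ.apply_symm_apply, iff_comm] at this
  simp [excWord, hlt, hsymm]

namespace TunnelWeight

variable {R : Type*} [CommSemiring R] (w : TunnelWeight R)

/-- The arc `i ↦ σ i` read as a tunnel: its letters are read at the positions `i` and `σ i`. -/
theorem letter_excWord (hσ : Avoids σ p321) (k : Fin n) :
    w.letter (n - k) (pathHeight 0 (excWord σ) k) (excWord σ k) =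
      (if k < σ k then w.left (k - n) else if σ k = k then w.centre else w.step (k - n)) *
        if σ.symm k < k then w.step (n - k - 1) else if σ.symm k = k then 1
          else w.right (n - k) := by
  have hclose : ¬ (σ.symm k < k ∧ ((cutHeight σ k : ℕ) : ℤ) ≤ 0) := by
    rintro ⟨hk, hcut⟩
    have : 0 < cutHeight σ k := card_pos.2 ⟨σ.symm k, by simpa using hk⟩
    omega
  have hfix : (¬ k < σ k ∧ ¬ σ.symm k < k ∧ ((cutHeight σ k : ℕ) : ℤ) = 0) ↔ σ k = k := by
    rw [apply_eq_self_iff hσ, not_lt, Int.natCast_eq_zero]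
    refine and_congr_right fun hk => and_iff_right_of_imp fun hcut => ?_
    exact (σ.symm_apply_eq.2 ((apply_eq_self_iff hσ k).2 ⟨hk, hcut⟩).symm).not_lt
  simp only [pathHeight_excWord, letter, excWord, decide_eq_true_eq, if_neg hclose, hfix, neg_sub]
  have hsymm : σ.symm k = k ↔ σ k = k := by rw [symm_apply_eq, eq_comm]
  by_cases hk : σ k = k
  · simp [hk, hsymm.2 hk]
  · simp [hk, hsymm]

theorem word_excWord (hσ : Avoids σ p321) :
    w.word 0 (excWord σ) = ∏ i : Fin n, w.tunnel (i - n) (n - σ i) := by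
  have hend : pathHeight 0 (excWord σ) n = 0 := by
    simp [pathHeight_excWord, cutHeight]
  rw [word, hend, if_pos rfl, mul_one, prod_congr rfl fun k _ => w.letter_excWord hσ k,
    prod_mul_distrib, ← Equiv.prod_comp σ fun k => if σ.symm k < k then _ else _,
    ← prod_mul_distrib]
  refine prod_congr rfl fun i _ => ?_
  rw [σ.symm_apply_apply, tunnel]
  rcases lt_trichotomy i (σ i) with h | h | h
  · rw [if_pos h, if_pos h, if_pos (by omega)]
  · rw [if_neg h.not_lt, if_pos h.symm, if_neg h.not_lt, if_pos h, if_neg (by omega),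
      if_pos (by omega), mul_one]
  · rw [if_neg h.not_gt, if_neg h.ne, if_neg h.not_gt, if_neg h.ne', if_neg (by omega),
      if_neg (by omega)]

theorem word_eq_zero (h : ¬ ∀ k, (f k).2 → 0 < pathHeight 0 f k) : w.word 0 f = 0 := by
  push Not at h
  obtain ⟨k, hk, hh⟩ := h
  rw [word, prod_eq_zero (mem_univ k) (by rw [letter, if_pos ⟨hk, hh⟩]), zero_mul]

open Classical in
theorem sum_prod_tunnel_avoids_p321 (n : ℕ) :
    ∑ σ : Perm (Fin n) with Avoids σ p321, ∏ i : Fin n, w.tunnel (i - n) (n - σ i) =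
      w.markedSum 0 (-n) n := by
  rw [← mul_zero 2, ← sum_word, Nat.cast_zero]
  refine sum_of_injOn excWord (fun σ hσ τ hτ h => excWord_injOn (by simpa using hσ)
    (by simpa using hτ) h) (fun _ _ => mem_coe.2 (mem_univ _)) (fun f _ hf => ?_) fun σ hσ =>
    (w.word_excWord (by simpa using hσ)).symm
  by_cases hpos : ∀ k, (f k).2 → 0 < pathHeight 0 f k
  · rw [word, if_neg, mul_zero]
    intro hn
    obtain ⟨σ, hσ, rfl⟩ := exists_excWord_eq hpos hn
    exact hf ⟨σ, by simpa using hσ, rfl⟩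
  · exact w.word_eq_zero hpos

end TunnelWeight

end Excedances

section Crossings

theorem card_inter_eq_min {α : Type*} [DecidableEq α] {s t : Finset α} (h : s ⊆ t ∨ t ⊆ s) :
    #(s ∩ t) = min #s #t := by
  rcases h with h | h
  · rw [inter_eq_left.2 h, min_eq_left (card_le_card h)]
  · rw [inter_eq_right.2 h, min_eq_right (card_le_card h)]

variable {n : ℕ}

/-- The number of crossings `(i, j)` of `σ` with the given `j`. -/
def crsAt (σ : Perm (Fin n)) (j : Fin n) : ℕ :=
  #{i : Fin n | ((i : ℕ) < j ∧ (j : ℕ) < σ i ∧ (σ i : ℕ) < σ j) ∨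
    ((σ i : ℕ) < σ j ∧ (σ j : ℕ) ≤ i ∧ (i : ℕ) < j)}

theorem crs_eq_sum_crsAt (σ : Perm (Fin n)) : crs σ = ∑ j, crsAt σ j := by
  simp only [crs, crsAt, card_filter, Fintype.sum_prod_type_right]

variable {σ : Perm (Fin n)}

theorem crsAt_of_lt (hσ : Avoids σ p132) {j : Fin n} (hj : j < σ j) :
    crsAt σ j = min (lowerLeft σ j) (σ j - j - 1) := by
  rw [avoids_p132_iff] at hσ
  have hcard : #{i | j < σ i ∧ σ i < σ j} = (σ j - j - 1 : ℕ) := by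
    rw [← Fin.card_Ioo]
    exact card_equiv σ (by simp)
  rw [lowerLeft, ← hcard, ← card_inter_eq_min, ← filter_and, crsAt]
  · congr 1
    ext i
    simp only [mem_filter, mem_univ, true_and]
    omega
  · by_contra! h
    obtain ⟨⟨i, hi, hi'⟩, l, hl, hl'⟩ := h.imp not_subset.1 not_subset.1
    simp only [mem_filter, mem_univ, true_and] at hi hi' hl hl'
    have hne : j ≠ l := by
      rintro rfl
      exact hl.2.false
    exact hσ i j l hi.1 (by omega) ⟨by omega, hl.2⟩

theorem crsAt_of_le (hσ : Avoids σ p132) {j : Fin n} (hj : σ j ≤ j) :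
    crsAt σ j = min (lowerLeft σ j) (j - σ j) := by
  rw [avoids_p132_iff] at hσ
  rw [lowerLeft, ← Fin.card_Ico, ← card_inter_eq_min, crsAt]
  · congr 1
    ext i
    simp only [mem_filter, mem_univ, true_and, mem_inter, mem_Ico]
    omega
  · by_contra! h
    obtain ⟨⟨i, hi, hi'⟩, l, hl, hl'⟩ := h.imp not_subset.1 not_subset.1
    simp only [mem_filter, mem_univ, true_and, mem_Ico] at hi hi' hl hl'
    have hne : σ l ≠ σ j := σ.injective.ne hl.2.ne
    exact hσ i l j (by omega) hl.2 ⟨hi.2, by omega⟩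

end Crossings

section Statistics

variable {n : ℕ} (σ : Perm (Fin n))

/-- The exponent vector of the monomial recording excedances, fixed points and crossings. -/
def statExponent : ℤ × ℤ × ℤ :=
  (exc σ, fp σ, 2 * (crs σ + exc σ))

/-- The contribution to `statExponent` of a tunnel from `a` to `b`, on a path centred at `0`. -/
def tunnelExponent (a b : ℤ) : ℤ × ℤ × ℤ :=
  if a + b < 0 then (1, 0, -a - |b|) else if a + b = 0 then (0, 1, 0) else (0, 0, b - 1 - |a + 1|)

variable {σ}

theorem sum_tunnelExponent_of_avoids_p321 (hσ : Avoids σ p321) :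
    ∑ i : Fin n, tunnelExponent (i - n) (n - σ i) = statExponent σ := by
  have hexp (i : Fin n) : tunnelExponent (i - n) (n - σ i) =
      (if (i : ℕ) < σ i then 1 else 0, if σ i = i then 1 else 0, |((σ i : ℕ) : ℤ) - (i : ℕ)|) := by
    simp only [tunnelExponent, Int.abs_eq_natAbs, Fin.ext_iff]
    split_ifs <;> first | omega | (congr 2; omega)
  simp only [hexp, statExponent, exc, fp, Prod.ext_iff, Prod.fst_sum, Prod.snd_sum, card_filter,
    Nat.cast_sum, Nat.cast_ite, Nat.cast_one, Nat.cast_zero, true_and]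
  rw [sum_abs_apply_sub, sum_cutHeight hσ, exc, card_filter]
  push_cast
  rfl

theorem sum_tunnelExponent_of_avoids_p132 (hσ : Avoids σ p132) :
    ∑ i : Fin n, tunnelExponent (-n + tunnelLeft σ i) (-n + tunnelRight σ i) = statExponent σ := by
  have hexp (i : Fin n) : tunnelExponent (-n + tunnelLeft σ i) (-n + tunnelRight σ i) =
      (if (i : ℕ) < σ i then 1 else 0, if σ i = i then 1 else 0,
        2 * ((crsAt σ i : ℤ) + if (i : ℕ) < σ i then 1 else 0)) := by
    have hlt := crsAt_of_lt hσ (j := i)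
    have hle := crsAt_of_le hσ (j := i)
    simp only [tunnelExponent, tunnelLeft, tunnelRight, Int.abs_eq_natAbs, Fin.ext_iff]
    split_ifs <;> first | omega | (congr 2; omega)
  simp only [hexp, statExponent, exc, fp, crs_eq_sum_crsAt, Prod.ext_iff, Prod.fst_sum,
    Prod.snd_sum, card_filter, Nat.cast_sum, Nat.cast_ite, Nat.cast_one, Nat.cast_zero, mul_sum,
    sum_add_distrib, mul_add, and_self]

end Statistics

section Bijection

variable {n : ℕ}

open AddMonoidAlgebra in
/-- The weight with values in `ℕ[q₁, q₂, q₃, q₁⁻¹, q₂⁻¹, q₃⁻¹]` for which a tunnel weighs the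
monomial with exponent vector `tunnelExponent`. -/
noncomputable def statWeight : TunnelWeight (AddMonoidAlgebra ℕ (ℤ × ℤ × ℤ)) where
  left a := single (1, 0, -a) 1
  right b := single (0, 0, b - 1) 1
  step a := single (0, 0, -|a + 1|) 1
  centre := single (0, 1, 0) 1

theorem statWeight_tunnel (a b : ℤ) :
    statWeight.tunnel a b = AddMonoidAlgebra.single (tunnelExponent a b) 1 := by
  rw [TunnelWeight.tunnel, tunnelExponent]
  split_ifs
  · simp [statWeight, AddMonoidAlgebra.single_mul_single, sub_eq_add_neg]
  · rfl
  · simp [statWeight, AddMonoidAlgebra.single_mul_single, sub_eq_add_neg, add_comm]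

open Classical in
theorem sum_single_statExponent_eq (n : ℕ) :
    ∑ σ : Perm (Fin n) with Avoids σ p321, AddMonoidAlgebra.single (statExponent σ) 1 =
      ∑ σ : Perm (Fin n) with Avoids σ p132, AddMonoidAlgebra.single (statExponent σ) (1 : ℕ) := by
  have hsum := statWeight.sum_prod_tunnel_avoids_p321 n
  rw [TunnelWeight.markedSum_zero] at hsum
  have hpath := pathSum_add_two_mul statWeight.tunnel (-n) n
  rw [show -(n : ℤ) + 2 * n = n by ring, ← hsum, tunnelSum] at hpath
  convert hpath using 2 with σ hσ σ hσ
  · rw [prod_congr rfl fun i _ => statWeight_tunnel _ _, AddMonoidAlgebra.prod_single,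
      sum_tunnelExponent_of_avoids_p321 (by simpa using hσ), prod_const_one]
  · rw [tunnelProd, prod_congr rfl fun i _ => statWeight_tunnel _ _, AddMonoidAlgebra.prod_single,
      sum_tunnelExponent_of_avoids_p132 (by simpa using hσ), prod_const_one]

theorem exists_equiv_of_sum_single_eq {α β G : Type*} [Fintype α] [Fintype β] {f : α → G}
    {g : β → G} (h : ∑ a, AddMonoidAlgebra.single (f a) (1 : ℕ) =
      ∑ b, AddMonoidAlgebra.single (g b) 1) : ∃ e : α ≃ β, ∀ a, g (e a) = f a := by
  classical
  have hcard (d : G) : Fintype.card {a // f a = d} = Fintype.card {b // g b = d} := by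
    have hcoeff := congrArg (AddMonoidAlgebra.coeff · d) h
    simpa [AddMonoidAlgebra.coeff_sum, Finsupp.single_apply, ← card_filter, Fintype.card_subtype]
      using hcoeff
  exact ⟨ofFiberEquiv fun d => Fintype.equivOfCardEq (hcard d), ofFiberEquiv_map _⟩

end Bijection

/-- For every `n` there is a bijection `Θ` from `S_n(321)` to `S_n(132)` preserving
the number of fixed points, excedances and crossings. -/
theorem exists_fp_exc_crs_preserving_bijection (n : ℕ) :
    ∃ Θ : {σ : Equiv.Perm (Fin n) // Avoids σ p321} ≃ {σ : Equiv.Perm (Fin n) // Avoids σ p132},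
      ∀ σ : {σ : Equiv.Perm (Fin n) // Avoids σ p321},
        fp ((Θ σ) : Equiv.Perm (Fin n)) = fp (σ : Equiv.Perm (Fin n)) ∧
        exc ((Θ σ) : Equiv.Perm (Fin n)) = exc (σ : Equiv.Perm (Fin n)) ∧
        crs ((Θ σ) : Equiv.Perm (Fin n)) = crs (σ : Equiv.Perm (Fin n)) := by
  classical
  obtain ⟨e, he⟩ := exists_equiv_of_sum_single_eq
    (f := fun σ : {σ : Perm (Fin n) // Avoids σ p321} => statExponent σ.1)
    (g := fun σ : {σ : Perm (Fin n) // Avoids σ p132} => statExponent σ.1) <| by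
      have hsum := sum_single_statExponent_eq n
      rwa [sum_subtype _ (p := (Avoids · p321)) (by simp),
        sum_subtype _ (p := (Avoids · p132)) (by simp)] at hsum
  refine ⟨e, fun σ => ?_⟩
  have hσ := he σ
  simp only [statExponent, Prod.mk.injEq] at hσ
  omega
end

section
/- For any set T of permutation patterns and every n ≥ 0, the joint distribution of (crs, nes) over S_n(T) equals that over S_n(rci(T)): the multisets {(crs(σ), nes(σ)) : σ ∈ S_n(T)} and {(crs(σ), nes(σ)) : σ ∈ S_n(rci(T))} are equal, where rci(T) = {rci(τ) : τ ∈ T}. -/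
open Equiv Finset

/-- The reverse-complement-inverse of a permutation:
`rci σ (j) = n+1-σ⁻¹(n+1-j)` (in 0-indexed form, `rci σ (j) = rev (σ⁻¹ (rev j))`). -/
def rci {n : ℕ} (σ : Equiv.Perm (Fin n)) : Equiv.Perm (Fin n) :=
  (Fin.revPerm.trans σ⁻¹).trans Fin.revPerm

/-!
The graph of `rci σ` is the graph of `σ` reflected in the antidiagonal, `(x, y) ↦ (rev y, rev x)`.
This reflection reverses both coordinate orders and exchanges the coordinates, so it maps points
above the diagonal to points above the diagonal and points weakly below it to points weakly below
it. Hence it carries crossings to crossings, exchanging the two points of each, and nestings to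
nestings; it also carries occurrences of `τ` in `σ` to occurrences of `rci τ` in `rci σ`.
-/

section Reflection

variable {n : ℕ} (σ : Equiv.Perm (Fin n))

theorem rci_apply (i : Fin n) : rci σ i = (σ⁻¹ i.rev).rev := rfl

@[simp]
theorem rci_rev_apply (i : Fin n) : rci σ (σ i).rev = i.rev := by
  simp [rci_apply]

theorem rci_involutive : Function.Involutive (rci (n := n)) := by
  intro σ
  ext1 i
  simpa using rci_rev_apply (rci σ) (σ i).rev

end Reflection

section CrossingsAndNestings

variable {n : ℕ}

/-- The pair `(i, j)` is a crossing of `σ`: `crs σ` counts these pairs. The order is that of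
`Fin n`, and the second disjunct is the case of two points weakly below the diagonal. -/
def IsCrossing (σ : Equiv.Perm (Fin n)) (i j : Fin n) : Prop :=
  (i < j ∧ j < σ i ∧ σ i < σ j) ∨ (σ i < σ j ∧ σ j ≤ i ∧ i < j)

/-- The pair `(i, j)` is a nesting of `σ`: `nes σ` counts these pairs. The order is that of
`Fin n`, and the second disjunct is the case of two points weakly below the diagonal. -/
def IsNesting (σ : Equiv.Perm (Fin n)) (i j : Fin n) : Prop :=
  (i < j ∧ j < σ j ∧ σ j < σ i) ∨ (σ j < σ i ∧ σ i ≤ i ∧ i < j)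

variable (σ : Equiv.Perm (Fin n))

theorem isCrossing_rci_iff (i j : Fin n) :
    IsCrossing (rci σ) (σ j).rev (σ i).rev ↔ IsCrossing σ i j := by
  simp only [IsCrossing, rci_rev_apply, Fin.rev_lt_rev, Fin.rev_le_rev]
  tauto

theorem isNesting_rci_iff (i j : Fin n) :
    IsNesting (rci σ) (σ i).rev (σ j).rev ↔ IsNesting σ i j := by
  simp only [IsNesting, rci_rev_apply, Fin.rev_lt_rev, Fin.rev_le_rev]
  tauto

theorem crs_rci : crs (rci σ) = crs σ := by
  let reflect : Fin n ≃ Fin n := σ.trans Fin.revPerm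
  let reflectSwap := (reflect.prodCongr reflect).trans (Equiv.prodComm _ _)
  refine (Finset.card_equiv reflectSwap fun q => ?_).symm
  rw [Finset.mem_filter_univ, Finset.mem_filter_univ]
  exact (isCrossing_rci_iff σ q.1 q.2).symm

theorem nes_rci : nes (rci σ) = nes σ := by
  let reflect : Fin n ≃ Fin n := σ.trans Fin.revPerm
  refine (Finset.card_equiv (reflect.prodCongr reflect) fun q => ?_).symm
  rw [Finset.mem_filter_univ, Finset.mem_filter_univ]
  exact (isNesting_rci_iff σ q.1 q.2).symm

end CrossingsAndNestings

section Avoidance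

theorem Contains.rci {n k : ℕ} {σ : Equiv.Perm (Fin n)} {τ : Equiv.Perm (Fin k)}
    (h : Contains σ τ) : Contains (rci σ) (rci τ) := by
  obtain ⟨f, hf, hστ⟩ := h
  -- The point of `rci τ` over `a` is the reflection of the point of `τ` over `τ⁻¹ (rev a)`.
  refine ⟨fun a => (σ (f (τ⁻¹ a.rev))).rev, fun a b hab => ?_, fun a b => ?_⟩
  · rw [Fin.rev_lt_rev, hστ]
    simpa using hab
  · simp only [rci_rev_apply, rci_apply τ, Fin.rev_lt_rev, hf.lt_iff_lt]

theorem avoids_rci_rci_iff {n k : ℕ} {σ : Equiv.Perm (Fin n)} {τ : Equiv.Perm (Fin k)} :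
    Avoids (rci σ) (rci τ) ↔ Avoids σ τ :=
  not_congr ⟨fun h => by simpa only [rci_involutive _] using h.rci, Contains.rci⟩

variable (T : Set (Σ k : ℕ, Equiv.Perm (Fin k))) (n : ℕ)

open scoped Classical in
/-- The class `S_n(T)` of permutations of `Fin n` avoiding every pattern in `T`. Patterns carry
their length, so that `T` may mix patterns of different lengths. -/
noncomputable def avoiders : Finset (Equiv.Perm (Fin n)) :=
  Finset.univ.filter fun σ => ∀ τ ∈ T, Avoids σ τ.2

/-- The set `rci(T)` of the reverse-complement-inverses of the patterns in `T`. -/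
def rciPatterns : Set (Σ k : ℕ, Equiv.Perm (Fin k)) :=
  (fun τ => ⟨τ.1, rci τ.2⟩) '' T

variable {T n}

theorem mem_avoiders {σ : Equiv.Perm (Fin n)} : σ ∈ avoiders T n ↔ ∀ τ ∈ T, Avoids σ τ.2 := by
  simp only [avoiders, Finset.mem_filter, Finset.mem_univ, true_and]

theorem rci_mem_avoiders_rciPatterns_iff {σ : Equiv.Perm (Fin n)} :
    rci σ ∈ avoiders (rciPatterns T) n ↔ σ ∈ avoiders T n := by
  simp only [mem_avoiders, rciPatterns, Set.forall_mem_image, avoids_rci_rci_iff]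

variable (T)

theorem map_rci_avoiders :
    (avoiders T n).map rci_involutive.toPerm.toEmbedding = avoiders (rciPatterns T) n := by
  ext σ
  rw [Finset.mem_map_equiv, Function.Involutive.toPerm_symm, Function.Involutive.coe_toPerm,
    ← rci_mem_avoiders_rciPatterns_iff, rci_involutive σ]

theorem map_avoiders_eq_of_rci_invariant {α : Type*} {f : Equiv.Perm (Fin n) → α}
    (hf : ∀ σ, f (rci σ) = f σ) :
    (avoiders T n).val.map f = (avoiders (rciPatterns T) n).val.map f := by
  rw [← map_rci_avoiders, Finset.map_val, Multiset.map_map]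
  exact Multiset.map_congr rfl fun σ _ => (hf σ).symm

end Avoidance

open scoped Classical in
/-- For any set `T` of patterns (of arbitrary lengths) and every `n`, the joint
distribution of `(crs, nes)` over `S_n(T)` equals that over `S_n(rci(T))`. -/
theorem crs_nes_equidistributed_avoid_rci (T : Set (Σ k : ℕ, Equiv.Perm (Fin k))) (n : ℕ) :
    ((Finset.univ.filter (fun σ : Equiv.Perm (Fin n) => ∀ τ ∈ T, Avoids σ τ.2)).val.map
        (fun σ => (crs σ, nes σ)))
      = ((Finset.univ.filter (fun σ : Equiv.Perm (Fin n) =>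
          ∀ τ ∈ (fun τ : Σ k : ℕ, Equiv.Perm (Fin k) => (⟨τ.1, rci τ.2⟩ : Σ k : ℕ, Equiv.Perm (Fin k))) '' T,
            Avoids σ τ.2)).val.map (fun σ => (crs σ, nes σ))) :=
  map_avoiders_eq_of_rci_invariant T fun σ => Prod.ext (crs_rci σ) (nes_rci σ)
end
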